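/- Let y_0 be a nondominated point of (P(0)) and assume the Slater condition. Then for every (z*,y*) ∈ S′_{Y_+}(y_0) the set Λ_{(z*,y*)} is nonempty; that is, there exists a closed convex process Δ : Z ⇉ Y with Δ(z) ≠ ∅ for all z ∈ Z and Graph(Δ) ∖ {(0,0)} ⊆ {(z,y) ∈ Z×Y : −z*(z)+y*(y) > 0}. -/

import Mathlib

open Pointwise Filter Topology

namespace Paper

section Defs

variable {E : Type*} [NormedAddCommGroup E] [NormedSpace ℝ E]

/-- The cone hull of a set: all nonnegative multiples of its elements. -/
def coneHull (A : Set E) : Set E := {x | ∃ r : ℝ, 0 ≤ r ∧ ∃ a ∈ A, x = r • a}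

/-- A cone: a nonempty set closed under multiplication by nonnegative scalars. -/
def IsCone (K : Set E) : Prop := K.Nonempty ∧ ∀ r : ℝ, 0 ≤ r → ∀ x ∈ K, r • x ∈ K

/-- A pointed cone: `K ∩ (-K) = {0}`. -/
def IsPointed (K : Set E) : Prop := K ∩ (-K) = {0}

/-- A proper cone: `{0} ≠ K ≠ E`. -/
def IsProper (K : Set E) : Prop := K ≠ {0} ∧ K ≠ Set.univ

/-- A solid cone: nonempty interior. -/
def IsSolid (K : Set E) : Prop := (interior K).Nonempty

/-- The contingent cone to `A` at `w`. -/
def contingentCone (A : Set E) (w : E) : Set E :=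
  {v | Filter.liminf (fun h : ℝ => Metric.infDist (w + h • v) A / h) (𝓝[>] (0:ℝ)) = 0}

end Defs

section SV

variable {X Y Z : Type*}
  [NormedAddCommGroup X] [NormedSpace ℝ X]
  [NormedAddCommGroup Y] [NormedSpace ℝ Y]
  [NormedAddCommGroup Z] [NormedSpace ℝ Z]

/-- The graph of a set-valued map. -/
def graph (Δ : Z → Set Y) : Set (Z × Y) := {p | p.2 ∈ Δ p.1}

/-- The image of a set by a set-valued map. -/
def imageSet (Δ : Z → Set Y) (A : Set Z) : Set Y := ⋃ w ∈ A, Δ w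

/-- The feasible set map `S(z) = {x ∈ Ω : G(x) ∩ (z - Z₊) ≠ ∅}`. -/
def Smap (Ω : Set X) (G : X → Set Z) (Zp : Set Z) (z : Z) : Set X :=
  {x | x ∈ Ω ∧ (G x ∩ ({z} - Zp)).Nonempty}

/-- The value map `V(z) = F(S(z))`. -/
def Vmap (Ω : Set X) (F : X → Set Y) (G : X → Set Z) (Zp : Set Z) (z : Z) : Set Y :=
  ⋃ x ∈ Smap Ω G Zp z, F x

/-- The map `(V + Y₊)(z) = V(z) + Y₊`. -/
def VplusMap (Ω : Set X) (F : X → Set Y) (G : X → Set Z) (Zp : Set Z) (Yp : Set Y)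
    (z : Z) : Set Y :=
  Vmap Ω F G Zp z + Yp

/-- The graph of `V + Y₊`. -/
def GraphVplus (Ω : Set X) (F : X → Set Y) (G : X → Set Z) (Zp : Set Z) (Yp : Set Y) :
    Set (Z × Y) :=
  {p : Z × Y | p.2 ∈ Vmap Ω F G Zp p.1 + Yp}

/-- Minimal points of a set `A` with respect to the cone `Yp`. -/
def MinSet (Yp : Set Y) (A : Set Y) : Set Y :=
  {a ∈ A | A ∩ ({a} - Yp) ⊆ {a} + Yp}

/-- The marginal map `M(z) = Min(V(z))`. -/
def Mmap (Ω : Set X) (F : X → Set Y) (G : X → Set Z) (Zp : Set Z) (Yp : Set Y)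
    (z : Z) : Set Y :=
  MinSet Yp (Vmap Ω F G Zp z)

/-- `y₀` is a nondominated point of `(P(0))`. -/
def Nondominated (Ω : Set X) (F : X → Set Y) (G : X → Set Z) (Zp : Set Z) (Yp : Set Y)
    (y0 : Y) : Prop :=
  y0 ∈ closure (Vmap Ω F G Zp 0) ∧
    Vmap Ω F G Zp 0 ∩ ({y0} - Yp) ⊆ {y0} + Yp

/-- `y₀` is a minimal point of `(P(0))`. -/
def MinimalPoint (Ω : Set X) (F : X → Set Y) (G : X → Set Z) (Zp : Set Z) (Yp : Set Y)
    (y0 : Y) : Prop :=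
  y0 ∈ Vmap Ω F G Zp 0 ∧
    Vmap Ω F G Zp 0 ∩ ({y0} - Yp) ⊆ {y0} + Yp

/-- The set `S_{Y₊}(y₀)` of separating pairs of continuous linear functionals. -/
def Sdual (Ω : Set X) (F : X → Set Y) (G : X → Set Z) (Zp : Set Z) (Yp : Set Y) (y0 : Y) :
    Set ((Z →L[ℝ] ℝ) × (Y →L[ℝ] ℝ)) :=
  {p | (∀ z' ∈ -Zp, ∀ y' ∈ ({y0} : Set Y) - Yp, p.1 z' + p.2 y' ≤ p.2 y0) ∧
       (∀ q ∈ GraphVplus Ω F G Zp Yp, p.2 y0 ≤ p.1 q.1 + p.2 q.2)}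

/-- `P(Z,Y)`: closed convex processes with full domain. -/
def PZY : Set (Z → Set Y) :=
  {Δ | IsClosed (graph Δ) ∧ Convex ℝ (graph Δ) ∧ IsCone (graph Δ) ∧ ∀ z, (Δ z).Nonempty}

/-- The set `Λ_{(z*,y*)}` of processes associated to `(z*,y*)`. -/
def Lambda (zs : Z →L[ℝ] ℝ) (ys : Y →L[ℝ] ℝ) : Set (Z → Set Y) :=
  {Δ | Δ ∈ PZY ∧ graph Δ \ {0} ⊆ {p : Z × Y | 0 < -(zs p.1) + ys p.2}}

/-- The set `Γ_{y₀}` of processes associated to `y₀`. -/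
def Gamma (Ω : Set X) (F : X → Set Y) (G : X → Set Z) (Zp : Set Z) (Yp : Set Y) (y0 : Y) :
    Set (Z → Set Y) :=
  ⋃ p ∈ Sdual Ω F G Zp Yp y0 \ {0}, Lambda p.1 p.2

/-- The Slater constraint qualification. -/
def Slater (Ω : Set X) (F : X → Set Y) (G : X → Set Z) (Zp : Set Z) : Prop :=
  ∃ x1 ∈ Ω, (F x1).Nonempty ∧ (G x1 ∩ (-interior Zp)).Nonempty

/-- `Ψ(Δ) = ∪_{x∈Ω}(F(x) + Δ(G(x)+Z₊))`. -/
def Umap (Ω : Set X) (F : X → Set Y) (G : X → Set Z) (Zp : Set Z) (Δ : Z → Set Y) : Set Y :=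
  ⋃ x ∈ Ω, (F x + imageSet Δ (G x + Zp))

/-- The dual map `Φ(Δ)`: nondominated points of the closure of `Ψ(Δ)`. -/
def Phi (Ω : Set X) (F : X → Set Y) (G : X → Set Z) (Zp : Set Z) (Yp : Set Y)
    (Δ : Z → Set Y) : Set Y :=
  {y ∈ closure (Umap Ω F G Zp Δ) | Umap Ω F G Zp Δ ∩ ({y} - Yp) ⊆ {y} + Yp}

/-- `Δ` is a Lagrange multiplier of `(P(0))` at `y₀`. -/
def LagrangeMultiplier (Ω : Set X) (F : X → Set Y) (G : X → Set Z) (Zp : Set Z) (Yp : Set Y)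
    (Δ : Z → Set Y) (y0 : Y) : Prop :=
  y0 ∈ closure (Umap Ω F G Zp Δ) ∧ Umap Ω F G Zp Δ ∩ ({y0} - Yp) ⊆ {y0} + Yp

/-- The graph of the Lagrange process of `(P(0))` at `y₀`. -/
def GraphLagrange (Ω : Set X) (F : X → Set Y) (G : X → Set Z) (Zp : Set Z) (Yp : Set Y)
    (y0 : Y) : Set (Z × Y) :=
  {p : Z × Y | ∀ q ∈ Sdual Ω F G Zp Yp y0, q.1 p.1 ≤ q.2 p.2}

/-- The Lagrange process of `(P(0))` at `y₀`, as a set-valued map. -/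
def Lagrange (Ω : Set X) (F : X → Set Y) (G : X → Set Z) (Zp : Set Z) (Yp : Set Y) (y0 : Y)
    (z : Z) : Set Y :=
  {y | (z, y) ∈ GraphLagrange Ω F G Zp Yp y0}

/-- The contingent derivative of a set-valued map `H` at `(z₀, y₀)`. -/
def contingentDeriv (H : Z → Set Y) (z0 : Z) (y0 : Y) (z : Z) : Set Y :=
  {y | (z, y) ∈ contingentCone (graph H) (z0, y0)}

/-- The S-derivative (Shi derivative) of a set-valued map `H` at `(z₀, y₀)`. -/
def Sderiv (H : Z → Set Y) (z0 : Z) (y0 : Y) (z : Z) : Set Y :=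
  {y | ∃ (h : ℕ → ℝ) (zn : ℕ → Z) (yn : ℕ → Y),
    (∀ n, 0 < h n) ∧ Filter.Tendsto zn Filter.atTop (𝓝 z) ∧
    Filter.Tendsto yn Filter.atTop (𝓝 y) ∧
    Filter.Tendsto (fun n => h n • zn n) Filter.atTop (𝓝 (0:Z)) ∧
    ∀ n, y0 + h n • yn n ∈ H (z0 + h n • zn n)}

/-- The standing assumptions of the paper: `Y₊`, `Z₊` proper solid convex cones, `Ω` nonempty
convex, `F` is `Y₊`-convex and `G` is `Z₊`-convex. -/
def StandingHyp (Ω : Set X) (F : X → Set Y) (G : X → Set Z) (Zp : Set Z) (Yp : Set Y) : Prop :=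
  IsCone Yp ∧ IsProper Yp ∧ IsSolid Yp ∧ Convex ℝ Yp ∧
  IsCone Zp ∧ IsProper Zp ∧ IsSolid Zp ∧ Convex ℝ Zp ∧
  Ω.Nonempty ∧ Convex ℝ Ω ∧
  Convex ℝ {p : X × Y | p.1 ∈ Ω ∧ p.2 ∈ F p.1 + Yp} ∧
  Convex ℝ {p : X × Z | p.1 ∈ Ω ∧ p.2 ∈ G p.1 + Zp}

end SV

variable {X Y Z : Type*}
  [NormedAddCommGroup X] [NormedSpace ℝ X]
  [NormedAddCommGroup Y] [NormedSpace ℝ Y]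
  [NormedAddCommGroup Z] [NormedSpace ℝ Z]

/-!
A process `Δ` with `graph Δ \ {0} ⊆ {φ > 0}`, where `φ (z, y) = -z* z + y* y`, can be taken with
graph the Bishop–Phelps cone `{x | ε * ‖x‖ ≤ φ x}`. All its values are nonempty as soon as `φ` is
positive at a vertical direction `(0, e)` and `ε` is small, because then every ray in the direction
`(0, e)` enters the cone. Such an `e` exists because `y* ≠ 0`: otherwise `z*` would be a nonzero
functional that is nonnegative on `Z₊`, hence positive on the interior of `Z₊`, while the Slater
point gives some `z` with `-z ∈ interior Z₊` and `z* z ≥ 0`.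
-/

section PositiveFunctional

variable {E : Type*} [AddCommGroup E] [TopologicalSpace E] [ContinuousAdd E]
  [Module ℝ E] [ContinuousSMul ℝ E]

lemma pos_of_mem_interior_of_forall_nonneg {f : E →L[ℝ] ℝ} (hf : f ≠ 0) {A : Set E}
    (hA : ∀ x ∈ A, 0 ≤ f x) {w : E} (hw : w ∈ interior A) : 0 < f w := by
  have hfw : f w ∈ interior (f '' A) :=
    (f.isOpenMap_of_ne_zero hf).image_interior_subset A (Set.mem_image_of_mem f hw)
  have hsub : f '' A ⊆ Set.Ici 0 := Set.image_subset_iff.2 hA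
  simpa only [interior_Ici, Set.mem_Ioi] using interior_mono hsub hfw

end PositiveFunctional

section BishopPhelps

open scoped NNReal

variable {E : Type*} [SeminormedAddCommGroup E] [NormedSpace ℝ E]

/-- The Bishop–Phelps cone `{x | ε * ‖x‖ ≤ φ x}` of a continuous linear functional `φ`, bundled as
a closed convex cone containing `0`. -/
def bishopPhelpsCone (φ : E →L[ℝ] ℝ) (ε : ℝ≥0) : ProperCone ℝ E where
  carrier := {x | ε * ‖x‖ ≤ φ x}
  zero_mem' := by simp
  add_mem' {x y} hx hy := calc
    ε * ‖x + y‖ ≤ ε * ‖x‖ + ε * ‖y‖ := by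
      rw [← mul_add]
      gcongr
      exact norm_add_le x y
    _ ≤ φ x + φ y := add_le_add hx hy
    _ = φ (x + y) := (map_add φ x y).symm
  smul_mem' := by
    rintro ⟨r, hr⟩ x hx
    calc
      ε * ‖r • x‖ = r * (ε * ‖x‖) := by rw [norm_smul_of_nonneg hr, mul_left_comm]
      _ ≤ r * φ x := mul_le_mul_of_nonneg_left hx hr
      _ = φ (r • x) := by rw [map_smul, smul_eq_mul]
  isClosed' := isClosed_le (by fun_prop) (by fun_prop)

lemma mem_bishopPhelpsCone {φ : E →L[ℝ] ℝ} {ε : ℝ≥0} {x : E} :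
    x ∈ bishopPhelpsCone φ ε ↔ ε * ‖x‖ ≤ φ x :=
  Iff.rfl

lemma exists_add_nsmul_mem_bishopPhelpsCone {φ : E →L[ℝ] ℝ} {ε : ℝ≥0} {v : E}
    (hv : ε * ‖v‖ < φ v) (x : E) : ∃ n : ℕ, x + n • v ∈ bishopPhelpsCone φ ε := by
  obtain ⟨n, hn⟩ := exists_nat_ge ((ε * ‖x‖ - φ x) / (φ v - ε * ‖v‖))
  rw [div_le_iff₀ (sub_pos.2 hv)] at hn
  refine ⟨n, mem_bishopPhelpsCone.2 ?_⟩
  calc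
    ε * ‖x + n • v‖ ≤ ε * (‖x‖ + n * ‖v‖) := by
      gcongr
      exact norm_add_le_of_le le_rfl norm_nsmul_le
    _ ≤ φ x + n * φ v := by linarith
    _ = φ (x + n • v) := by rw [map_add, map_nsmul, nsmul_eq_mul]

lemma pos_of_mem_bishopPhelpsCone {E : Type*} [NormedAddCommGroup E] [NormedSpace ℝ E]
    {φ : E →L[ℝ] ℝ} {ε : ℝ≥0} (hε : 0 < ε) {x : E} (hx : x ∈ bishopPhelpsCone φ ε)
    (hx0 : x ≠ 0) : 0 < φ x :=
  (mul_pos (NNReal.coe_pos.2 hε) (norm_pos_iff.2 hx0)).trans_le hx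

end BishopPhelps

/-- The set-valued map with graph `A`; it turns a cone in `Z × Y` into a process. -/
def fiberMap {Y Z : Type*} (A : Set (Z × Y)) : Z → Set Y := fun z => {y | (z, y) ∈ A}

lemma graph_fiberMap {Y Z : Type*} (A : Set (Z × Y)) : graph (fiberMap A) = A := rfl

lemma fiberMap_mem_PZY {C : ProperCone ℝ (Z × Y)} (hC : ∀ z, ∃ y, (z, y) ∈ C) :
    fiberMap (C : Set (Z × Y)) ∈ PZY :=
  ⟨C.isClosed, C.convex, ⟨C.nonempty, fun _ hr _ hx => C.smul_mem hx hr⟩, hC⟩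

theorem Lambda_nonempty_of_ne_zero (zs : Z →L[ℝ] ℝ) {ys : Y →L[ℝ] ℝ} (hys : ys ≠ 0) :
    (Lambda zs ys).Nonempty := by
  let φ : Z × Y →L[ℝ] ℝ := (-zs).coprod ys
  obtain ⟨e, he⟩ : ∃ e, ys e = 1 := LinearMap.surjective (mod_cast hys) 1
  have hφe : 0 < φ (0, e) := by simp [φ, he]
  obtain ⟨ε, hε, hεe⟩ : ∃ ε > 0, ε * ‖((0 : Z), e)‖ < φ (0, e) := by
    simpa only [mul_comm] using exists_pos_mul_lt hφe ‖((0 : Z), e)‖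
  lift ε to NNReal using hε.le
  let C := bishopPhelpsCone φ ε
  have hfibers : ∀ z, ∃ y, (z, y) ∈ C := by
    intro z
    obtain ⟨n, hn⟩ := exists_add_nsmul_mem_bishopPhelpsCone hεe (z, 0)
    exact ⟨n • e, by simpa using hn⟩
  refine ⟨fiberMap C, fiberMap_mem_PZY hfibers, ?_⟩
  rw [graph_fiberMap]
  rintro x ⟨hxC, hx0⟩
  simpa [φ] using pos_of_mem_bishopPhelpsCone (NNReal.coe_pos.1 hε) hxC hx0

lemma exists_mem_GraphVplus_of_slater {T Y Z : Type*} [NormedAddCommGroup Y]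
    [NormedAddCommGroup Z] {Ω : Set T} {F : T → Set Y} {G : T → Set Z} {Zp : Set Z} {Yp : Set Y}
    (hYp : Yp.Nonempty) (hZp : 0 ∈ Zp) (hSl : Slater Ω F G Zp) :
    ∃ q ∈ GraphVplus Ω F G Zp Yp, -q.1 ∈ interior Zp := by
  obtain ⟨x, hx, ⟨y, hy⟩, z, hz, hz_int⟩ := hSl
  obtain ⟨u, hu⟩ := hYp
  have hxS : x ∈ Smap Ω G Zp z := ⟨hx, z, hz, z, rfl, 0, hZp, sub_zero z⟩
  exact ⟨(z, y + u), Set.add_mem_add (Set.mem_biUnion hxS hy) hu, hz_int⟩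

lemma snd_ne_zero_of_mem_Sdual {T : Type*} {Ω : Set T} {F : T → Set Y} {G : T → Set Z}
    {Zp : Set Z} {Yp : Set Y} {y0 : Y} (hYp : Yp.Nonempty) (hZp : 0 ∈ Zp)
    (hSl : Slater Ω F G Zp) {p : (Z →L[ℝ] ℝ) × (Y →L[ℝ] ℝ)}
    (hp : p ∈ Sdual Ω F G Zp Yp y0) (hp0 : p ≠ 0) : p.2 ≠ 0 := by
  intro hys
  have hzs : p.1 ≠ 0 := fun h => hp0 (Prod.ext h hys)
  obtain ⟨hpolar, hgraph⟩ := hp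
  have hnonneg : ∀ z ∈ Zp, 0 ≤ p.1 z := by
    intro z hz
    obtain ⟨u, hu⟩ := hYp
    simpa [hys] using hpolar (-z) (Set.neg_mem_neg.2 hz) (y0 - u) (Set.sub_mem_sub rfl hu)
  obtain ⟨q, hq, hq_int⟩ := exists_mem_GraphVplus_of_slater hYp hZp hSl
  have hq_nonneg : 0 ≤ p.1 q.1 := by simpa [hys] using hgraph q hq
  have hq_pos : 0 < p.1 (-q.1) := pos_of_mem_interior_of_forall_nonneg hzs hnonneg hq_int
  rw [map_neg] at hq_pos
  linarith

lemma IsCone.zero_mem {E : Type*} [NormedAddCommGroup E] [NormedSpace ℝ E] {K : Set E}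
    (hK : IsCone K) : (0 : E) ∈ K := by
  obtain ⟨⟨x, hx⟩, hsmul⟩ := hK
  simpa only [zero_smul] using hsmul 0 le_rfl x hx

theorem stmt_4_general {T : Type*} {Ω : Set T} {F : T → Set Y} {G : T → Set Z}
    {Zp : Set Z} {Yp : Set Y} (hYp : Yp.Nonempty) (hZp : 0 ∈ Zp) (hSl : Slater Ω F G Zp) {y0 : Y}
    {p : (Z →L[ℝ] ℝ) × (Y →L[ℝ] ℝ)} (hp : p ∈ Sdual Ω F G Zp Yp y0 \ {0}) :
    (Lambda p.1 p.2).Nonempty :=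
  Lambda_nonempty_of_ne_zero p.1 (snd_ne_zero_of_mem_Sdual hYp hZp hSl hp.1 hp.2)

theorem stmt_4 (Ω : Set X) (F : X → Set Y) (G : X → Set Z) (Zp : Set Z) (Yp : Set Y)
    (hSt : StandingHyp Ω F G Zp Yp)
    (y0 : Y) (hy0 : Nondominated Ω F G Zp Yp y0)
    (hSl : Slater Ω F G Zp)
    (p : (Z →L[ℝ] ℝ) × (Y →L[ℝ] ℝ)) (hp : p ∈ Sdual Ω F G Zp Yp y0 \ {0}) :
    ∃ Δ : Z → Set Y, Δ ∈ PZY ∧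
      graph Δ \ {0} ⊆ {q : Z × Y | 0 < -(p.1 q.1) + p.2 q.2} := by
  obtain ⟨hYp, _, _, _, hZp, _⟩ := hSt
  exact stmt_4_general hYp.1 hZp.zero_mem hSl hp

end Paper
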